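/- Let H : Ω → S(m) be continuously differentiable with repeated eigenvalues λ_i(x) and eigenprojections P_i(x), and fix j ∈ {1,…,m}. The following conditions are equivalent: (a) λ_j is continuously differentiable in Ω and tr P_j is constant in Ω; (b) λ_j is differentiable in Ω and tr P_j is constant in Ω; (c) P_j is differentiable in Ω; (d) P_j is continuous in Ω. -/

import Mathlib

open scoped Classical

/-- Entrywise directional derivative `D_e H(x)` of a matrix-valued map. -/
noncomputable def DH {E : Type*} [NormedAddCommGroup E] [NormedSpace ℝ E] {m : ℕ}
    (H : E → Matrix (Fin m) (Fin m) ℝ) (x e : E) : Matrix (Fin m) (Fin m) ℝ :=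
  Matrix.of fun i k => fderiv ℝ (fun y => H y i k) x e

/-- Second-order directional derivative `D_b D_a H(x)` (first `a`, then `b`). -/
noncomputable def DH2 {E : Type*} [NormedAddCommGroup E] [NormedSpace ℝ E] {m : ℕ}
    (H : E → Matrix (Fin m) (Fin m) ℝ) (x a b : E) : Matrix (Fin m) (Fin m) ℝ :=
  Matrix.of fun i k => fderiv ℝ (fun y => DH H y a i k) x b

/-- The pseudoinverse `A_j(x)` of `λ_j(x)I - H(x)`. -/
noncomputable def Amat {E : Type*} {m : ℕ} (lam : Fin m → E → ℝ)
    (P : Fin m → E → Matrix (Fin m) (Fin m) ℝ) (j : Fin m) (x : E) :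
    Matrix (Fin m) (Fin m) ℝ :=
  ∑ i ∈ Finset.univ.filter (fun i => lam i x ≠ lam j x),
    (((Finset.univ.filter fun k => lam k x = lam i x).card : ℝ) * (lam j x - lam i x))⁻¹ • P i x

/-!
The matrix `D x = H x - λ x + P x₀` is invertible at `x = x₀`, hence near `x₀`, and satisfies
`D x P x = P x₀ P x`. So `V x = (D x)⁻¹ P x₀` satisfies `V x P x = P x`, and if the rank of `P` is
locally constant then `V x` and `P x` have the same range. The orthogonal projection onto the range
of `V` is `V (1 + V - V*)⁻¹` (the Kerzman–Stein formula), so `P` inherits the differentiability of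
`H` and `λ`.

Conversely, `P x (H y - H x) P y = (λ y - λ x) P x P y`. Taking traces, one sees that
continuity of `P` alone yields `dλ = tr (P dH P) / tr P`, which is again continuous.
-/

open Filter Topology

section Eigenvalue

variable {𝕜 E A : Type*} [NontriviallyNormedField 𝕜] [NormedAddCommGroup E] [NormedSpace 𝕜 E]
  [NormedRing A] [NormedAlgebra 𝕜 A]

theorem hasFDerivAt_mul_of_eq_zero_of_continuousAt {f g : E → A} {f' : E →L[𝕜] A} {x : E}
    (hf : HasFDerivAt f f' x) (hfx : f x = 0) (hg : ContinuousAt g x) :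
    HasFDerivAt (fun y => f y * g y) ((ContinuousLinearMap.mul 𝕜 A).flip (g x) ∘L f') x := by
  have hconst : HasFDerivAt (fun y => f y * g x)
      ((ContinuousLinearMap.mul 𝕜 A).flip (g x) ∘L f') x :=
    ((ContinuousLinearMap.mul 𝕜 A).flip (g x)).hasFDerivAt.comp x hf
  have hrem : HasFDerivAt (fun y => f y * (g y - g x)) (0 : E →L[𝕜] A) x := by
    have hfO : f =O[𝓝 x] fun y => y - x := by simpa [hfx] using hf.isBigO_sub
    have hgo : (fun y => g y - g x) =o[𝓝 x] fun _ => (1 : ℝ) :=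
      (Asymptotics.isLittleO_one_iff ℝ).2 (by simpa using hg.tendsto.sub_const (g x))
    rw [hasFDerivAt_iff_isLittleO]
    simpa using (hfO.norm_right.mul_isLittleO hgo).norm_right
  rw [← add_zero (_ ∘L f')]
  exact (hconst.add hrem).congr_of_eventuallyEq (.of_forall fun y => by simp [mul_sub])

theorem hasFDerivAt_eigenvalue {h p : E → A} {l : E → 𝕜} {h' : E →L[𝕜] A} {x : E}
    (τ : A →L[𝕜] 𝕜) (hτ : τ (p x) ≠ 0) (hidem : IsIdempotentElem (p x))
    (hleft : p x * h x = l x • p x) (hright : ∀ᶠ y in 𝓝 x, h y * p y = l y • p y)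
    (hh : HasFDerivAt h h' x) (hp : ContinuousAt p x) :
    HasFDerivAt l
      ((τ (p x))⁻¹ • τ ∘L ContinuousLinearMap.mulLeftRight 𝕜 A (p x) (p x) ∘L h') x := by
  have hτp : ContinuousAt (fun y => τ (p x * p y)) x :=
    τ.continuous.continuousAt.comp (continuousAt_const.mul hp)
  have hτx : τ (p x * p x) ≠ 0 := by rwa [hidem.eq]
  have hdiff : HasFDerivAt (fun y => p x * (h y - h x))
      (ContinuousLinearMap.mul 𝕜 A (p x) ∘L h') x :=
    (ContinuousLinearMap.mul 𝕜 A (p x)).hasFDerivAt.comp x (hh.sub_const (h x))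
  have hquot := (τ.hasFDerivAt.comp x (hasFDerivAt_mul_of_eq_zero_of_continuousAt hdiff (by simp)
    ((hτp.inv₀ hτx).smul hp))).const_add (l x)
  refine (hquot.congr_of_eventuallyEq ?_).congr_fderiv ?_
  · filter_upwards [hright, hτp.eventually_ne hτx] with y hy hτy
    have hsub : p x * (h y - h x) * p y = (l y - l x) • (p x * p y) := by
      rw [mul_sub, sub_mul, hleft, mul_assoc, hy, mul_smul_comm, smul_mul_assoc, sub_smul]
    simp [hsub, mul_comm (l y - l x), inv_mul_cancel_left₀ hτy]
  · ext v
    simp [hidem.eq]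

theorem contDiffOn_one_eigenvalue {h p : E → A} {l : E → 𝕜} {Ω : Set E} (hΩ : IsOpen Ω)
    (τ : A →L[𝕜] 𝕜) (hτ : ∀ x ∈ Ω, τ (p x) ≠ 0) (hidem : ∀ x ∈ Ω, IsIdempotentElem (p x))
    (hleft : ∀ x ∈ Ω, p x * h x = l x • p x) (hright : ∀ x ∈ Ω, h x * p x = l x • p x)
    (hh : ContDiffOn 𝕜 1 h Ω) (hp : ContinuousOn p Ω) : ContDiffOn 𝕜 1 l Ω := by
  have hder (x) (hx : x ∈ Ω) := hasFDerivAt_eigenvalue τ (hτ x hx) (hidem x hx) (hleft x hx)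
    (eventually_of_mem (hΩ.mem_nhds hx) hright)
    ((hh.contDiffAt (hΩ.mem_nhds hx)).differentiableAt one_ne_zero).hasFDerivAt
    (hp.continuousAt (hΩ.mem_nhds hx))
  rw [← zero_add 1, contDiffOn_succ_iff_hasFDerivWithinAt_of_uniqueDiffOn hΩ.uniqueDiffOn]
  refine ⟨by simp, _, contDiffOn_zero.2 ?_, fun x hx => (hder x hx).hasFDerivWithinAt⟩
  have hsandwich : ContinuousOn
      (fun x => ContinuousLinearMap.mulLeftRight 𝕜 A (p x) (p x)) Ω :=
    ((ContinuousLinearMap.mulLeftRight 𝕜 A).continuous.comp_continuousOn hp).clm_apply hp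
  exact ((τ.continuous.comp_continuousOn hp).inv₀ hτ).smul
    (continuousOn_const.clm_comp (hsandwich.clm_comp (hh.continuousOn_fderiv_of_isOpen hΩ le_rfl)))

end Eigenvalue

theorem mul_one_add_sub_star_eq {R : Type*} [Ring R] [StarRing R] {p v : R} (hp : IsSelfAdjoint p)
    (hpv : p * v = v) (hvp : v * p = p) : p * (1 + v - star v) = v := by
  have hstar : p * star v = p := by simpa [hp.star_eq] using congrArg star hvp
  rw [mul_sub, mul_add, mul_one, hpv, hstar, add_sub_cancel_left]

theorem differentiableAt_of_eventually_mul_eq {𝕜 E A : Type*} [NontriviallyNormedField 𝕜]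
    [StarRing 𝕜] [TrivialStar 𝕜] [NormedAddCommGroup E] [NormedSpace 𝕜 E] [NormedRing A]
    [NormedAlgebra 𝕜 A] [HasSummableGeomSeries A] [StarRing A] [StarModule 𝕜 A] [ContinuousStar A]
    {p v : E → A} {x : E} (hv : DifferentiableAt 𝕜 v x) (hvx : IsSelfAdjoint (v x))
    (hp : ∀ᶠ y in 𝓝 x, IsSelfAdjoint (p y)) (hpv : ∀ᶠ y in 𝓝 x, p y * v y = v y)
    (hvp : ∀ᶠ y in 𝓝 x, v y * p y = p y) : DifferentiableAt 𝕜 p x := by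
  have hu : DifferentiableAt 𝕜 (fun y => 1 + v y - star (v y)) x := (hv.const_add 1).sub hv.star
  have hux : IsUnit (1 + v x - star (v x)) := by simp [hvx.star_eq]
  refine (hv.mul (hu.inverse hux)).congr_of_eventuallyEq ?_
  filter_upwards [hp, hpv, hvp, hu.continuousAt.eventually (Units.isOpen.mem_nhds hux)]
    with y hpy hpvy hvpy huy
  exact (Ring.eq_mul_inverse_iff_mul_eq _ _ _ huy).2 (mul_one_add_sub_star_eq hpy hpvy hvpy)

theorem mul_eq_smul_comm_of_isSelfAdjoint {R A : Type*} [Star R] [TrivialStar R] [Mul A]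
    [StarMul A] [SMul R A] [StarModule R A] {a p : A} {r : R} (ha : IsSelfAdjoint a)
    (hp : IsSelfAdjoint p) (h : a * p = r • p) : p * a = r • p := by
  simpa [ha.star_eq, hp.star_eq] using congrArg star h

section Matrix

open Matrix

variable {ι : Type*} [Fintype ι]

theorem trace_eq_rank_of_isIdempotentElem {K : Type*} [Field K] {P : Matrix ι ι K}
    (hP : IsIdempotentElem P) : P.trace = P.rank := by
  have hlin : IsIdempotentElem (toLin' P) := by
    rw [IsIdempotentElem, Module.End.mul_eq_comp, ← toLin'_mul, hP.eq]
  rw [← trace_toLin'_eq, (LinearMap.IsIdempotentElem.isProj_range _ hlin).trace, Matrix.rank,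
    toLin'_apply']

theorem mul_eq_right_of_mul_eq_right_of_rank_le {K : Type*} [Field K] {P V : Matrix ι ι K}
    (hP : IsIdempotentElem P) (hVP : V * P = P) (hrank : V.rank ≤ P.rank) : P * V = V := by
  have hle : LinearMap.range P.mulVecLin ≤ LinearMap.range V.mulVecLin := by
    rw [← hVP, mulVecLin_mul]
    exact LinearMap.range_comp_le_range _ _
  have hrange := Submodule.eq_of_le_of_finrank_le hle hrank
  refine ext_of_mulVec_single fun i => ?_
  obtain ⟨u, hu⟩ : V *ᵥ Pi.single i 1 ∈ LinearMap.range P.mulVecLin := hrange ▸ ⟨_, rfl⟩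
  rw [mulVecLin_apply] at hu
  rw [← mulVec_mulVec, ← hu, mulVec_mulVec, hP.eq]

variable {𝕜 : Type*} [RCLike 𝕜]

/-- `P` is the eigenprojection of `H` at the eigenvalue `μ`: the orthogonal projection onto the
space of `v` with `H v = μ v`. The condition `P ≠ 0` says that `μ` is an eigenvalue. -/
structure IsEigenprojection (H : Matrix ι ι 𝕜) (μ : ℝ) (P : Matrix ι ι 𝕜) : Prop where
  isStarProjection : IsStarProjection P
  ne_zero : P ≠ 0
  mulVec_eq_smul_iff (v : ι → 𝕜) : H *ᵥ v = μ • v ↔ P *ᵥ v = v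

/-- The coefficients `c i` absorb repetitions in the list of eigenvalues. -/
theorem isEigenprojection_of_sum_smul_eq_one [DecidableEq ι] {κ : Type*} [Fintype κ]
    {H : Matrix ι ι 𝕜} {μ c : κ → ℝ} {P : κ → Matrix ι ι 𝕜} {j : κ} (hH : H.IsHermitian)
    (hPherm : ∀ i, (P i).IsHermitian) (hHP : ∀ i, H * P i = μ i • P i)
    (hPeq : ∀ i, μ i = μ j → P i = P j) (hsum : ∑ i, c i • P i = 1)
    (hidem : IsIdempotentElem (P j)) (hne : P j ≠ 0) : IsEigenprojection H (μ j) (P j) := by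
  refine ⟨⟨hidem, hPherm j⟩, hne, fun v => ⟨fun hv => ?_, fun hv => ?_⟩⟩
  · have hvanish (i) (hi : μ i ≠ μ j) : P i *ᵥ v = 0 := by
      have hswap : μ i • P i *ᵥ v = μ j • P i *ᵥ v := by
        rw [← smul_mulVec, ← mul_eq_smul_comm_of_isSelfAdjoint hH (hPherm i) (hHP i),
          ← mulVec_mulVec, hv, mulVec_smul]
      rw [← sub_eq_zero, ← sub_smul, smul_eq_zero] at hswap
      exact hswap.resolve_left (sub_ne_zero.2 hi)
    have hv_sum : ∑ i, c i • P i *ᵥ v = v := by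
      simpa [sum_mulVec, smul_mulVec] using congrArg (· *ᵥ v) hsum
    rw [← hv_sum, mulVec_sum]
    refine Finset.sum_congr rfl fun i _ => ?_
    rw [mulVec_smul]
    by_cases hi : μ i = μ j
    · rw [hPeq i hi, mulVec_mulVec, hidem.eq]
    · rw [hvanish i hi, mulVec_zero]
  · rw [← hv, mulVec_mulVec, hHP, smul_mulVec]

namespace IsEigenprojection

variable {H P : Matrix ι ι 𝕜} {μ : ℝ}

theorem mul_eq_smul (h : IsEigenprojection H μ P) : H * P = μ • P := by
  refine ext_of_mulVec_single fun i => ?_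
  rw [← mulVec_mulVec, smul_mulVec, h.mulVec_eq_smul_iff, mulVec_mulVec,
    h.isStarProjection.isIdempotentElem.eq]

theorem mul_eq_smul' (h : IsEigenprojection H μ P) (hH : H.IsHermitian) : P * H = μ • P :=
  mul_eq_smul_comm_of_isSelfAdjoint hH h.isStarProjection.isSelfAdjoint h.mul_eq_smul

open scoped ComplexOrder in
theorem re_trace_ne_zero (h : IsEigenprojection H μ P) : RCLike.re P.trace ≠ 0 := by
  have hP := h.isStarProjection
  have htrace := trace_eq_rank_of_isIdempotentElem hP.isIdempotentElem
  intro hre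
  rw [htrace, RCLike.natCast_re, Nat.cast_eq_zero] at hre
  refine h.ne_zero (trace_conjTranspose_mul_self_eq_zero_iff.1 ?_)
  rw [← star_eq_conjTranspose, hP.isSelfAdjoint.star_eq, hP.isIdempotentElem.eq, htrace, hre,
    Nat.cast_zero]

theorem isUnit_sub_smul_add [DecidableEq ι] (h : IsEigenprojection H μ P) (hH : H.IsHermitian) :
    IsUnit (H - μ • 1 + P) := by
  refine mulVec_injective_iff_isUnit.1 <|
    (injective_iff_map_eq_zero (H - μ • 1 + P).mulVecLin).2 fun v hv => ?_
  rw [mulVecLin_apply] at hv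
  have hPv : P *ᵥ v = 0 := by
    have hPD : P * (H - μ • 1 + P) = P := by
      simp [mul_add, mul_sub, h.mul_eq_smul' hH, h.isStarProjection.isIdempotentElem.eq]
    rw [← hPD, ← mulVec_mulVec, hv, mulVec_zero]
  have hHv : H *ᵥ v = μ • v := by
    simpa [add_mulVec, sub_mulVec, smul_mulVec, hPv, sub_eq_zero] using hv
  rw [← (h.mulVec_eq_smul_iff v).1 hHv, hPv]

end IsEigenprojection

section Regularity

open scoped Matrix.Norms.Frobenius

variable {E : Type*} [NormedAddCommGroup E] [NormedSpace ℝ E]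

theorem differentiableAt_matrix {m n F : Type*} [Finite m] [Finite n] [NormedAddCommGroup F]
    [NormedSpace ℝ F] {M : E → Matrix m n F} {x : E} :
    DifferentiableAt ℝ M x ↔ ∀ i k, DifferentiableAt ℝ (fun y => M y i k) x := by
  have := Fintype.ofFinite m
  have := Fintype.ofFinite n
  exact differentiableAt_pi.trans (forall_congr' fun _ => differentiableAt_pi)

theorem contDiffOn_matrix {m n F : Type*} [Fintype m] [Fintype n] [NormedAddCommGroup F]
    [NormedSpace ℝ F] [FiniteDimensional ℝ F] {M : E → Matrix m n F} {Ω : Set E}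
    {r : WithTop ℕ∞} :
    ContDiffOn ℝ r M Ω ↔ ∀ i k, ContDiffOn ℝ r (fun y => M y i k) Ω := by
  let e : Matrix m n F ≃L[ℝ] (m → n → F) := (ofLinearEquiv ℝ).symm.toContinuousLinearEquiv
  exact e.comp_contDiffOn_iff.symm.trans <|
    contDiffOn_pi.trans (forall_congr' fun _ => contDiffOn_pi)

theorem IsEigenprojection.differentiableAt {H P : E → Matrix ι ι 𝕜} {l : E → ℝ} {x : E}
    (h : ∀ᶠ y in 𝓝 x, IsEigenprojection (H y) (l y) (P y)) (hHx : (H x).IsHermitian)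
    (hrank : ∀ᶠ y in 𝓝 x, (P y).rank = (P x).rank) (hH : DifferentiableAt ℝ H x)
    (hl : DifferentiableAt ℝ l x) : DifferentiableAt ℝ P x := by
  have hx := h.self_of_nhds
  have hPx := hx.isStarProjection
  let D (y : E) : Matrix ι ι 𝕜 := H y - l y • 1 + P x
  have hD : DifferentiableAt ℝ D x := (hH.sub (hl.smul_const 1)).add_const (P x)
  have hDx : IsUnit (D x) := hx.isUnit_sub_smul_add hHx
  have hDP (y) (hy : H y * P y = l y • P y) : D y * P y = P x * P y := by
    simp [D, add_mul, sub_mul, hy]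
  let V (y : E) : Matrix ι ι 𝕜 := Ring.inverse (D y) * P x
  have hVx : V x = P x := by
    rw [Ring.inverse_mul_eq_iff_eq_mul _ _ _ hDx, hDP x hx.mul_eq_smul, hPx.isIdempotentElem.eq]
  have hVP : ∀ᶠ y in 𝓝 x, V y * P y = P y := by
    filter_upwards [h, hD.continuousAt.eventually (Units.isOpen.mem_nhds hDx)] with y hy hDy
    rw [mul_assoc, Ring.inverse_mul_eq_iff_eq_mul _ _ _ hDy, hDP y hy.mul_eq_smul]
  have hPV : ∀ᶠ y in 𝓝 x, P y * V y = V y := by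
    filter_upwards [h, hVP, hrank] with y hy hVPy hranky
    exact mul_eq_right_of_mul_eq_right_of_rank_le hy.isStarProjection.isIdempotentElem hVPy
      ((rank_mul_le_right _ _).trans_eq hranky.symm)
  exact differentiableAt_of_eventually_mul_eq ((hD.inverse hDx).mul_const (P x))
    (hVx.symm ▸ hPx.isSelfAdjoint :) (h.mono fun y hy => hy.isStarProjection.isSelfAdjoint) hPV hVP

theorem IsEigenprojection.contDiffOn_one {H P : E → Matrix ι ι 𝕜} {l : E → ℝ}
    {Ω : Set E} (hΩ : IsOpen Ω) (h : ∀ x ∈ Ω, IsEigenprojection (H x) (l x) (P x))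
    (hherm : ∀ x ∈ Ω, (H x).IsHermitian) (hH : ContDiffOn ℝ 1 H Ω) (hP : ContinuousOn P Ω) :
    ContDiffOn ℝ 1 l Ω :=
  contDiffOn_one_eigenvalue hΩ
    (RCLike.reCLM ∘L (traceLinearMap ι ℝ 𝕜).toContinuousLinearMap)
    (fun x hx => (h x hx).re_trace_ne_zero)
    (fun x hx => (h x hx).isStarProjection.isIdempotentElem)
    (fun x hx => (h x hx).mul_eq_smul' (hherm x hx)) (fun x hx => (h x hx).mul_eq_smul) hH hP

end Regularity

theorem exists_trace_eq_of_isPreconnected {K X : Type*} [Field K] [TopologicalSpace K]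
    [ContinuousAdd K] [T1Space K] [TopologicalSpace X] {P : X → Matrix ι ι K} {Ω : Set X}
    (hΩ : IsPreconnected Ω) (hidem : ∀ x ∈ Ω, IsIdempotentElem (P x))
    (hP : ContinuousOn P Ω) : ∃ c, ∀ x ∈ Ω, (P x).trace = c := by
  have hfinite : (Nat.cast '' Set.Iic (Fintype.card ι) : Set K).Finite :=
    (Set.finite_Iic _).image _
  obtain ⟨c, -, hc⟩ := hΩ.eqOn_const_of_mapsTo hfinite.isDiscrete
    (continuous_id.matrix_trace.comp_continuousOn hP)
    (fun x hx => ⟨_, rank_le_card_width _, (trace_eq_rank_of_isIdempotentElem (hidem x hx)).symm⟩)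
    (Set.nonempty_Iic.image _)
  exact ⟨c, hc⟩

theorem eigenprojection_regularity_equivalences_general {E : Type*} [NormedAddCommGroup E]
    [NormedSpace ℝ E] {Ω : Set E} (hΩo : IsOpen Ω) (hΩc : IsPreconnected Ω)
    {H P : E → Matrix ι ι 𝕜} {l : E → ℝ} (hherm : ∀ x ∈ Ω, (H x).IsHermitian)
    (hP : ∀ x ∈ Ω, IsEigenprojection (H x) (l x) (P x))
    (hH : ∀ i k, ContDiffOn ℝ 1 (fun y => H y i k) Ω) :
    List.TFAE
      [ ContDiffOn ℝ 1 l Ω ∧ ∃ c, ∀ x ∈ Ω, (P x).trace = c,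
        (∀ x ∈ Ω, DifferentiableAt ℝ l x) ∧ ∃ c, ∀ x ∈ Ω, (P x).trace = c,
        ∀ i k, ∀ x ∈ Ω, DifferentiableAt ℝ (fun y => P y i k) x,
        ∀ i k, ContinuousOn (fun y => P y i k) Ω ] := by
  have hidem (x) (hx : x ∈ Ω) := (hP x hx).isStarProjection.isIdempotentElem
  tfae_have 1 → 2 := fun ⟨hl, hc⟩ =>
    ⟨fun x hx => (hl.contDiffAt (hΩo.mem_nhds hx)).differentiableAt one_ne_zero, hc⟩
  tfae_have 2 → 3 := by
    rintro ⟨hl, c, hc⟩ i k x hx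
    have hΩx := hΩo.mem_nhds hx
    have hrank (y) (hy : y ∈ Ω) : (P y).rank = (P x).rank := by
      rw [← Nat.cast_inj (R := 𝕜), ← trace_eq_rank_of_isIdempotentElem (hidem y hy),
        ← trace_eq_rank_of_isIdempotentElem (hidem x hx), hc y hy, hc x hx]
    have hHdiff : DifferentiableAt ℝ H x := differentiableAt_matrix.2 fun i k =>
      ((hH i k).contDiffAt hΩx).differentiableAt one_ne_zero
    have hPdiff : DifferentiableAt ℝ P x := IsEigenprojection.differentiableAt
      (eventually_of_mem hΩx hP) (hherm x hx) (eventually_of_mem hΩx hrank) hHdiff (hl x hx)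
    exact differentiableAt_matrix.1 hPdiff i k
  tfae_have 3 → 4 := fun hdiff i k x hx => (hdiff i k x hx).continuousAt.continuousWithinAt
  tfae_have 4 → 1 := fun hcont =>
    have hPcont : ContinuousOn P Ω :=
      continuousOn_pi.2 fun i => continuousOn_pi.2 fun k => hcont i k
    ⟨IsEigenprojection.contDiffOn_one hΩo hP hherm (contDiffOn_matrix.2 hH) hPcont,
      exists_trace_eq_of_isPreconnected hΩc hidem hPcont⟩
  tfae_finish

end Matrix

theorem eigenprojection_regularity_equivalences {n m : ℕ}
    (Ω : Set (EuclideanSpace ℝ (Fin n))) (hΩo : IsOpen Ω) (hΩc : IsConnected Ω)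
    (H : EuclideanSpace ℝ (Fin n) → Matrix (Fin m) (Fin m) ℝ)
    (lam : Fin m → EuclideanSpace ℝ (Fin n) → ℝ)
    (P : Fin m → EuclideanSpace ℝ (Fin n) → Matrix (Fin m) (Fin m) ℝ)
    (hsymm : ∀ x ∈ Ω, (H x).IsSymm)
    (hmono : ∀ x ∈ Ω, Monotone fun i => lam i x)
    (hPsymm : ∀ (j : Fin m) (x), x ∈ Ω → (P j x).IsSymm)
    (hPidem : ∀ (j : Fin m) (x), x ∈ Ω → P j x * P j x = P j x)
    (hHP : ∀ (j : Fin m) (x), x ∈ Ω → H x * P j x = lam j x • P j x)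
    (htr : ∀ (j : Fin m) (x), x ∈ Ω →
      (P j x).trace = ((Finset.univ.filter fun i => lam i x = lam j x).card : ℝ))
    (hPeq : ∀ (i j : Fin m) (x), x ∈ Ω → lam i x = lam j x → P i x = P j x)
    (hPorth : ∀ (i j : Fin m) (x), x ∈ Ω → lam i x ≠ lam j x → P i x * P j x = 0)
    (hcompl : ∀ x ∈ Ω,
      ∑ i, ((Finset.univ.filter fun k => lam k x = lam i x).card : ℝ)⁻¹ • P i x = 1)
    (hH : ∀ i k, ContDiffOn ℝ 1 (fun y => H y i k) Ω)
    (j : Fin m) :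
    List.TFAE
      [ ContDiffOn ℝ 1 (lam j) Ω ∧ ∃ c : ℝ, ∀ x ∈ Ω, (P j x).trace = c,
        (∀ x ∈ Ω, DifferentiableAt ℝ (lam j) x) ∧ ∃ c : ℝ, ∀ x ∈ Ω, (P j x).trace = c,
        ∀ (i k : Fin m), ∀ x ∈ Ω, DifferentiableAt ℝ (fun y => P j y i k) x,
        ∀ (i k : Fin m), ContinuousOn (fun y => P j y i k) Ω ] := by
  have hP (x) (hx : x ∈ Ω) : IsEigenprojection (H x) (lam j x) (P j x) := by
    refine isEigenprojection_of_sum_smul_eq_one (μ := fun i => lam i x) (P := fun i => P i x)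
      (Matrix.isHermitian_iff_isSymm.2 (hsymm x hx))
      (fun i => Matrix.isHermitian_iff_isSymm.2 (hPsymm i x hx)) (fun i => hHP i x hx)
      (fun i => hPeq i j x hx) (hcompl x hx) (hPidem j x hx) fun hzero => ?_
    have hcard := htr j x hx
    rw [hzero, Matrix.trace_zero, eq_comm, Nat.cast_eq_zero, Finset.card_eq_zero] at hcard
    simpa [hcard] using Finset.mem_filter_univ (p := fun i => lam i x = lam j x) j
  exact eigenprojection_regularity_equivalences_general hΩo hΩc.isPreconnected
    (fun x hx => Matrix.isHermitian_iff_isSymm.2 (hsymm x hx)) hP hH
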